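/- Let D be a squarefree positive integer with D ≡ 1 or 2 (mod 4), so that -4D is the (fundamental) discriminant of the imaginary quadratic field K = ℚ(√-D). Then the class number h of K satisfies h < (4√D/π)·log(2e√D). -/

import Mathlib

/-!
By Minkowski's theorem every ideal class contains an integral ideal of norm at most
`(2 / π) √|discr K|`, and `|discr K| ≤ 4D` because the order `ℤ[α]` has discriminant `-4D`
(`abs_discr_le`). So every class is represented by an ideal of norm at most `M = 4√D / π`.

A quadratic field has at most `τ(n)` ideals of norm `n` (`card_ideals_absNorm_eq_le`): above each
prime `p` there are at most two primes, so that once one of them is singled out, an ideal of norm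
`n` is determined by its exponents at the chosen primes (`ideal_eq_of_multiplicity_eq`), and these
exponents are recorded by a divisor of `n`. Therefore
`h ≤ ∑_{n ≤ M} τ(n) = ∑_{k ≤ M} ⌊⌊M⌋ / k⌋ ≤ M (1 + log M) = M log (e M)`,
and `M < 2√D` since `π > 2`.
-/

open IntermediateField
open NumberField

section quad
variable {K : Type} [Field K] [NumberField K]

/-! ### Ideals of given norm in a quadratic field -/

lemma prime_dvd_absNorm_of_mem {p : ℕ} (hp : p.Prime) {P : Ideal (𝓞 K)} (hP : P.IsMaximal)
    (hpP : (p : 𝓞 K) ∈ P) : p ∣ Ideal.absNorm P := by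
  have h1 : Ideal.absNorm P ∣ p ^ Module.finrank ℤ (𝓞 K) := by
    rw [← Ideal.absNorm_span_natCast]
    exact Ideal.absNorm_dvd_absNorm_of_le ((Ideal.span_singleton_le_iff_mem P).2 hpP)
  obtain ⟨k, -, hk⟩ := (Nat.dvd_prime_pow hp).1 h1
  rcases Nat.eq_zero_or_pos k with rfl | hk0
  · exact absurd (Ideal.absNorm_eq_one_iff.1 (by simpa using hk)) hP.ne_top
  · rw [hk]
    exact dvd_pow_self p hk0.ne'

/-- At most two primes lie above `p`: otherwise the product of three of them, of norm divisible by
`p ^ 3`, would divide `(p)`, of norm `p ^ 2`. -/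
lemma eq_of_ne_of_ne (h2 : Module.finrank ℚ K = 2) {p : ℕ} (hp : p.Prime)
    {P Q Q' : Ideal (𝓞 K)} (hP : P.IsMaximal) (hQ : Q.IsMaximal) (hQ' : Q'.IsMaximal)
    (hpP : (p : 𝓞 K) ∈ P) (hpQ : (p : 𝓞 K) ∈ Q) (hpQ' : (p : 𝓞 K) ∈ Q')
    (h : Q ≠ P) (h' : Q' ≠ P) : Q = Q' := by
  by_contra hne
  have d (I : Ideal (𝓞 K)) (hI : (p : 𝓞 K) ∈ I) : I ∣ Ideal.span {(p : 𝓞 K)} :=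
    Ideal.dvd_iff_le.2 ((Ideal.span_singleton_le_iff_mem I).2 hI)
  have hdvd : P * (Q * Q') ∣ Ideal.span {(p : 𝓞 K)} :=
    IsCoprime.mul_dvd
      ((Ideal.isCoprime_of_isMaximal h.symm).mul_right (Ideal.isCoprime_of_isMaximal h'.symm))
      (d P hpP) ((Ideal.isCoprime_of_isMaximal hne).mul_dvd (d Q hpQ) (d Q' hpQ'))
  have hn := Ideal.absNorm_dvd_absNorm_of_le (Ideal.dvd_iff_le.1 hdvd)
  rw [Ideal.absNorm_span_natCast, RingOfIntegers.rank, h2, map_mul, map_mul] at hn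
  have h3 : p ^ 3 ∣ p ^ 2 := by
    refine dvd_trans ?_ hn
    have := mul_dvd_mul (prime_dvd_absNorm_of_mem hp hP hpP)
      (mul_dvd_mul (prime_dvd_absNorm_of_mem hp hQ hpQ) (prime_dvd_absNorm_of_mem hp hQ' hpQ'))
    simpa [pow_succ, mul_assoc] using this
  exact absurd ((Nat.pow_dvd_pow_iff_le_right hp.one_lt).1 h3) (by norm_num)

/-- Fix a prime `S p` above each `p`. In a quadratic field, an ideal is determined by its norm
and the exponents of the `S p` in it: above `p` there is at most one prime besides `S p`, and its
exponent can be read off from the norm. -/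
lemma ideal_eq_of_multiplicity_eq (h2 : Module.finrank ℚ K = 2) (S : ℕ → Ideal (𝓞 K))
    (hS : ∀ p : ℕ, p.Prime → (S p).IsMaximal ∧ (p : 𝓞 K) ∈ S p) (n : ℕ) (hn : n ≠ 0)
    (I J : Ideal (𝓞 K)) (hI : Ideal.absNorm I = n) (hJ : Ideal.absNorm J = n)
    (h : ∀ p : ℕ, p.Prime → p ∣ n → multiplicity (S p) I = multiplicity (S p) J) : I = J := by
  induction n using Nat.strong_induction_on generalizing I J with
  | _ n ih =>
  have ne0 {A : Ideal (𝓞 K)} (hA : Ideal.absNorm A ≠ 0) : A ≠ 0 := by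
    rintro rfl; simp at hA
  have prm {A : Ideal (𝓞 K)} {p : ℕ} (hp : p.Prime) (hA : A.IsMaximal) (hpA : (p : 𝓞 K) ∈ A) :
      Prime A := by
    refine Ideal.prime_of_isPrime ?_ hA.isPrime
    rintro rfl
    simp [hp.ne_zero] at hpA
  have fin {A B : Ideal (𝓞 K)} (hA : Prime A) (hB : B ≠ 0) : FiniteMultiplicity A B :=
    FiniteMultiplicity.of_prime_left hA hB
  by_cases h1 : n = 1
  · subst h1
    rw [Ideal.absNorm_eq_one_iff] at hI hJ
    rw [hI, hJ]
  obtain ⟨p, hp, hpn⟩ := Nat.exists_prime_and_dvd h1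
  obtain ⟨hSm, hSp⟩ := hS p hp
  -- A common prime factor above `p` can be cancelled, which leaves a smaller norm.
  suffices hQ : ∃ Q : Ideal (𝓞 K), Q.IsMaximal ∧ (p : 𝓞 K) ∈ Q ∧ Q ∣ I ∧ Q ∣ J by
    obtain ⟨Q, hQm, hpQ, ⟨I', rfl⟩, ⟨J', rfl⟩⟩ := hQ
    have hpN := prime_dvd_absNorm_of_mem hp hQm hpQ
    rw [map_mul] at hI hJ
    have hI0 : Ideal.absNorm I' ≠ 0 := by rintro h0; simp [h0] at hI; exact hn hI.symm
    have hJ0 : Ideal.absNorm J' ≠ 0 := by rintro h0; simp [h0] at hJ; exact hn hJ.symm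
    have hQ0 : Ideal.absNorm Q ≠ 0 := by rintro h0; simp [h0] at hI; exact hn hI.symm
    have hQ1 : 1 < Ideal.absNorm Q :=
      lt_of_lt_of_le hp.one_lt (Nat.le_of_dvd (Nat.pos_of_ne_zero hQ0) hpN)
    have hJI : Ideal.absNorm J' = Ideal.absNorm I' :=
      Nat.eq_of_mul_eq_mul_left (Nat.pos_of_ne_zero hQ0) (hJ.trans hI.symm)
    congr 1
    refine ih (Ideal.absNorm I') ?_ hI0 I' J' rfl hJI ?_
    · rw [← hI]
      exact lt_mul_of_one_lt_left (Nat.pos_of_ne_zero hI0) hQ1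
    · intro q hq hqI
      have hSq := prm hq (hS q hq).1 (hS q hq).2
      have hh := h q hq (hI ▸ hqI.mul_left _)
      rw [multiplicity_mul hSq (fin hSq (mul_ne_zero (ne0 hQ0) (ne0 hI0))),
        multiplicity_mul hSq (fin hSq (mul_ne_zero (ne0 hQ0) (ne0 hJ0)))] at hh
      exact Nat.add_left_cancel hh
  have hiff : S p ∣ I ↔ S p ∣ J := by
    rw [← not_iff_not, ← multiplicity_eq_zero, ← multiplicity_eq_zero, h p hp hpn]
  by_cases hSI : S p ∣ I
  · exact ⟨S p, hSm, hSp, hSI, hiff.1 hSI⟩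
  · have mem {A : Ideal (𝓞 K)} (hA : A.under ℤ = Ideal.span {(p : ℤ)}) : (p : 𝓞 K) ∈ A := by
      have : (p : ℤ) ∈ A.under ℤ := hA ▸ Ideal.mem_span_singleton_self _
      simpa [Ideal.under_def, Ideal.mem_comap] using this
    obtain ⟨Q, hQ, hQp, hQI⟩ := Ideal.exists_isMaximal_dvd_of_dvd_absNorm' hp I (hI ▸ hpn)
    obtain ⟨Q', hQ', hQp', hQJ⟩ := Ideal.exists_isMaximal_dvd_of_dvd_absNorm' hp J (hJ ▸ hpn)
    have : Q = Q' := eq_of_ne_of_ne h2 hp hSm hQ hQ' hSp (mem hQp) (mem hQp')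
      (by rintro rfl; exact hSI hQI) (by rintro rfl; exact hSI (hiff.2 hQJ))
    exact ⟨Q, hQ, mem hQp, hQI, this ▸ hQJ⟩

/-- With `S p` a fixed prime above `p`, sending `I` to
`∏ p ^ v_{S p}(I)` is an injection from the ideals of norm `n` to the divisors of `n`. -/
lemma card_ideals_absNorm_eq_le (h2 : Module.finrank ℚ K = 2) (n : ℕ) (hn : n ≠ 0)
    (s : Finset (Ideal (𝓞 K))) (hs : ∀ I ∈ s, Ideal.absNorm I = n) :
    s.card ≤ n.divisors.card := by
  have hex : ∀ p : ℕ, ∃ P : Ideal (𝓞 K), p.Prime → P.IsMaximal ∧ (p : 𝓞 K) ∈ P := by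
    intro p
    by_cases hp : p.Prime
    · obtain ⟨P, hP, -, hd⟩ := Ideal.exists_isMaximal_dvd_of_dvd_absNorm' hp
        (Ideal.span {(p : 𝓞 K)}) (by
          rw [Ideal.absNorm_span_natCast, RingOfIntegers.rank, h2]
          exact dvd_pow_self p two_ne_zero)
      exact ⟨P, fun _ ↦ ⟨hP, (Ideal.span_singleton_le_iff_mem P).1 (Ideal.dvd_iff_le.1 hd)⟩⟩
    · exact ⟨⊥, fun h ↦ absurd h hp⟩
  choose S hS using hex
  refine Finset.card_le_card_of_injOn
    (fun I ↦ ∏ p ∈ n.primeFactors, p ^ multiplicity (S p) I) ?_ ?_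
  · intro I hI
    have hI := hs I hI
    rw [Finset.mem_coe, Nat.mem_divisors]
    refine ⟨?_, hn⟩
    refine Finset.prod_dvd_of_isRelPrime ?_ ?_
    · intro p hp q hq hpq
      rw [Function.onFun, ← Nat.coprime_iff_isRelPrime]
      exact Nat.Coprime.pow _ _ ((Nat.coprime_primes (Nat.prime_of_mem_primeFactors hp)
        (Nat.prime_of_mem_primeFactors hq)).2 hpq)
    · intro p hp
      have hp := Nat.prime_of_mem_primeFactors hp
      have h1 := Ideal.absNorm_dvd_absNorm_of_le
        (Ideal.dvd_iff_le.1 (pow_multiplicity_dvd (S p) I))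
      rw [map_pow, hI] at h1
      exact (pow_dvd_pow_of_dvd (prime_dvd_absNorm_of_mem hp (hS p hp).1 (hS p hp).2) _).trans h1
  · intro I hI J hJ hIJ
    refine ideal_eq_of_multiplicity_eq h2 S hS n hn I J (hs I hI) (hs J hJ) ?_
    intro q hq hqn
    have key (A : Ideal (𝓞 K)) :
        (∏ p ∈ n.primeFactors, p ^ multiplicity (S p) A).factorization q
          = multiplicity (S q) A := by
      rw [Nat.factorization_prod_apply
        (fun p hp ↦ pow_ne_zero _ (Nat.prime_of_mem_primeFactors hp).ne_zero),
        Finset.sum_eq_single q]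
      · simp [hq.factorization_self]
      · intro p hp hpq
        have := Nat.prime_of_mem_primeFactors hp
        simp [this.factorization, hpq]
      · intro h; exact absurd (Nat.mem_primeFactors.2 ⟨hq, hqn, hn⟩) h
    rw [← key I, ← key J]
    exact congrArg (fun m : ℕ ↦ m.factorization q) hIJ

/-! ### The divisor sum -/

/-- Each `k ≤ N` divides `⌊N / k⌋ ≤ N / k` of the numbers `1, …, N`. -/
lemma sum_card_divisors_le (N : ℕ) :
    ((∑ n ∈ Finset.Ioc 0 N, n.divisors.card : ℕ) : ℝ) ≤ N * (harmonic N : ℝ) := by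
  have h1 : ∀ n ∈ Finset.Ioc 0 N, n.divisors.card =
      ∑ k ∈ Finset.Ioc 0 N, if k ∣ n then 1 else 0 := by
    intro n hn
    rw [← Finset.card_filter]
    congr 1
    ext k
    simp only [Finset.mem_Ioc] at hn
    simp only [Nat.mem_divisors, Finset.mem_filter, Finset.mem_Ioc]
    constructor
    · rintro ⟨h, -⟩
      exact ⟨⟨Nat.pos_of_dvd_of_pos h hn.1, (Nat.le_of_dvd hn.1 h).trans hn.2⟩, h⟩
    · rintro ⟨-, h⟩
      exact ⟨h, by omega⟩
  rw [Finset.sum_congr rfl h1, Finset.sum_comm]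
  simp_rw [← Finset.card_filter, Nat.Ioc_filter_dvd_card_eq_div]
  rw [harmonic_eq_sum_Icc]
  push_cast
  rw [Finset.mul_sum]
  exact Finset.sum_le_sum fun k _ ↦ Nat.cast_div_le.trans_eq (div_eq_mul_inv _ _)

/-! ### Invariants of `ℚ(√-D)` -/

lemma finrank_eq_two {D : ℕ} (hD0 : 0 < D) {α : K} (hα : α ^ 2 = -(D : K)) (hgen : ℚ⟮α⟯ = ⊤) :
    Module.finrank ℚ K = 2 ∧ Algebra.trace ℚ K α = 0 := by
  have hmonic : (Polynomial.X ^ 2 + Polynomial.C (D : ℚ)).Monic :=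
    Polynomial.monic_X_pow_add_C _ two_ne_zero
  have hdeg : (Polynomial.X ^ 2 + Polynomial.C (D : ℚ)).natDegree = 2 :=
    Polynomial.natDegree_X_pow_add_C
  have hirr : Irreducible (Polynomial.X ^ 2 + Polynomial.C (D : ℚ)) := by
    rw [hmonic.irreducible_iff_roots_eq_zero_of_degree_le_three (by omega) (by omega)]
    refine Multiset.eq_zero_of_forall_notMem fun x hx ↦ ?_
    have := (Polynomial.mem_roots'.1 hx).2
    simp at this
    have : (0 : ℚ) < D := by exact_mod_cast hD0
    nlinarith [sq_nonneg x]
  have hmin := minpoly.eq_of_irreducible_of_monic hirr (x := α) (by simp [hα]) hmonic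
  have hfr : Module.finrank ℚ K = 2 := by
    rw [← finrank_top', ← hgen, adjoin.finrank (Algebra.IsIntegral.isIntegral α), ← hmin, hdeg]
  refine ⟨hfr, ?_⟩
  rw [trace_eq_finrank_mul_minpoly_nextCoeff, ← hmin, Polynomial.nextCoeff, hdeg]
  simp [Polynomial.coeff_X_pow]

/-- The order `ℤ[α]` has discriminant `-4D`, which is `discr K` times a nonzero square. -/
lemma abs_discr_le {D : ℕ} (hD0 : 0 < D) {α : K} (hα : α ^ 2 = -(D : K)) (hgen : ℚ⟮α⟯ = ⊤) :
    |discr K| ≤ 4 * D := by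
  obtain ⟨h2, htr⟩ := finrank_eq_two hD0 hα hgen
  have hint : IsIntegral ℤ α := by
    refine ⟨Polynomial.X ^ 2 + Polynomial.C (D : ℤ),
      Polynomial.monic_X_pow_add_C _ two_ne_zero, ?_⟩
    simp [hα]
  let a : 𝓞 K := ⟨α, hint⟩
  have ha : a * a = ((-D : ℤ) : 𝓞 K) := by
    apply RingOfIntegers.ext
    simp only [map_mul, map_intCast]
    change α * α = _
    rw [← pow_two, hα]
    simp
  have hta : Algebra.trace ℤ (𝓞 K) a = 0 := by
    have := Algebra.coe_trace_int a
    have h' : (a : K) = α := rfl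
    rw [h', htr] at this
    exact_mod_cast this
  have htc (c : ℤ) : Algebra.trace ℤ (𝓞 K) (c : 𝓞 K) = 2 * c := by
    have := Algebra.trace_algebraMap (S := 𝓞 K) c
    rw [RingOfIntegers.rank, h2] at this
    simpa using this
  have ht1 : Algebra.trace ℤ (𝓞 K) 1 = 2 := by simpa using htc 1
  let v : Fin 2 → 𝓞 K := ![1, a]
  have hv : Algebra.discr ℤ v = -4 * D := by
    rw [Algebra.discr_def, Matrix.det_fin_two]
    simp only [Algebra.traceMatrix_apply, Algebra.traceForm_apply, v, Matrix.cons_val_zero,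
      Matrix.cons_val_one, one_mul, mul_one, ha, hta, ht1, htc]
    ring
  let b : Module.Basis (Fin 2) ℤ (𝓞 K) :=
    Module.finBasisOfFinrankEq ℤ (𝓞 K) ((RingOfIntegers.rank K).trans h2)
  have hb := Algebra.discr_of_matrix_vecMul (A := ℤ) (b : Fin 2 → 𝓞 K) (b.toMatrix v)
  have hvb : Matrix.vecMul (b : Fin 2 → 𝓞 K) ((b.toMatrix v).map (algebraMap ℤ (𝓞 K))) = v := by
    exact b.toMatrix_map_vecMul v
  rw [hvb, hv, discr_eq_discr] at hb
  set d := (b.toMatrix v).det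
  have hd : d ≠ 0 := by
    intro h
    rw [h] at hb
    have : (0 : ℤ) < D := by exact_mod_cast hD0
    simp at hb
    omega
  have hd2 : 1 ≤ d ^ 2 := Int.add_one_le_iff.2 (sq_pos_iff.2 hd)
  calc |discr K| ≤ d ^ 2 * |discr K| := le_mul_of_one_le_left (abs_nonneg _) hd2
    _ = |d ^ 2 * discr K| := by rw [abs_mul, abs_of_nonneg (sq_nonneg d)]
    _ = 4 * D := by rw [← hb, abs_mul]; simp

lemma nrComplexPlaces_eq_one {D : ℕ} (hD0 : 0 < D) {α : K} (hα : α ^ 2 = -(D : K))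
    (h2 : Module.finrank ℚ K = 2) : InfinitePlace.nrComplexPlaces K = 1 := by
  have h0 : InfinitePlace.nrRealPlaces K = 0 := by
    rw [nrRealPlaces_eq_zero_iff, isTotallyComplex_iff]
    intro w
    rw [← InfinitePlace.not_isReal_iff_isComplex]
    intro hw
    have := congrArg (InfinitePlace.embedding_of_isReal hw) hα
    simp only [map_pow, map_neg, map_natCast] at this
    have h' : (0 : ℝ) < D := by exact_mod_cast hD0
    nlinarith [sq_nonneg (InfinitePlace.embedding_of_isReal hw α)]
  have := InfinitePlace.card_add_two_mul_card_eq_rank K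
  omega

/-! ### The class number bound -/

lemma classNumber_le (h2 : Module.finrank ℚ K = 2) (N : ℕ)
    (hN : ∀ C : ClassGroup (𝓞 K), ∃ I : nonZeroDivisors (Ideal (𝓞 K)),
      ClassGroup.mk0 I = C ∧ Ideal.absNorm (I : Ideal (𝓞 K)) ≤ N) :
    classNumber K ≤ ∑ n ∈ Finset.Ioc 0 N, n.divisors.card := by
  classical
  choose f hf hfN using hN
  have hinj : Function.Injective (fun C ↦ (f C : Ideal (𝓞 K))) := by
    intro C C' h
    rw [← hf C, ← hf C', Subtype.ext h]
  let s : Finset (Ideal (𝓞 K)) := Finset.univ.image (fun C ↦ (f C : Ideal (𝓞 K)))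
  have hs : s.card = classNumber K := Finset.card_image_of_injective _ hinj
  rw [← hs, Finset.card_eq_sum_card_fiberwise (f := fun I ↦ Ideal.absNorm I)
    (t := Finset.Ioc 0 N)]
  · refine Finset.sum_le_sum fun n hn ↦ ?_
    refine card_ideals_absNorm_eq_le h2 n ?_ _ (fun I hI ↦ (Finset.mem_filter.1 hI).2)
    exact (Finset.mem_Ioc.1 hn).1.ne'
  · intro I hI
    obtain ⟨C, -, rfl⟩ := Finset.mem_image.1 hI
    exact Finset.mem_Ioc.2 ⟨Ideal.absNorm_pos_of_nonZeroDivisors (f C), hfN C⟩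

end quad

theorem stmt_14 (D : ℕ) (hD0 : 0 < D) (hsq : Squarefree D)
    (hmod : D % 4 = 1 ∨ D % 4 = 2)
    (K : Type) [Field K] [NumberField K] (α : K)
    (hα : α ^ 2 = -(D : K)) (hgen : ℚ⟮α⟯ = ⊤) :
    (NumberField.classNumber K : ℝ) <
      4 * Real.sqrt D / Real.pi * Real.log (2 * Real.exp 1 * Real.sqrt D) := by
  obtain ⟨h2, -⟩ := finrank_eq_two hD0 hα hgen
  have hr2 := nrComplexPlaces_eq_one hD0 hα h2
  have hdisc := abs_discr_le hD0 hα hgen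
  set M : ℝ := 4 * Real.sqrt D / Real.pi with hM
  have hpi := Real.pi_pos
  have hsD : 1 ≤ Real.sqrt D := by
    rw [Real.one_le_sqrt]
    exact_mod_cast hD0
  have hM1 : 1 ≤ M := by
    rw [hM, le_div_iff₀ hpi]
    linarith [Real.pi_le_four]
  have hM0 : 0 < M := by linarith
  have hMlt : M < 2 * Real.sqrt D := by
    rw [hM, div_lt_iff₀ hpi]
    nlinarith [Real.pi_gt_three]
  have hle : classNumber K ≤ ∑ n ∈ Finset.Ioc 0 ⌊M⌋₊, n.divisors.card := by
    refine classNumber_le h2 _ fun C ↦ ?_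
    obtain ⟨I, hI, hIn⟩ := exists_ideal_in_class_of_norm_le C
    refine ⟨I, hI, Nat.le_floor (hIn.trans ?_)⟩
    have hs : Real.sqrt |(discr K : ℝ)| ≤ 2 * Real.sqrt D := by
      rw [Real.sqrt_le_left (by positivity), mul_pow, Real.sq_sqrt (by positivity)]
      have : ((|discr K| : ℤ) : ℝ) ≤ ((4 * D : ℤ) : ℝ) := Int.cast_le.2 hdisc
      push_cast at this
      linarith
    rw [hr2, h2]
    simp only [pow_one, Nat.factorial_two, Nat.cast_ofNat]
    calc 4 / Real.pi * (2 / 2 ^ 2 * Real.sqrt |(discr K : ℝ)|)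
        ≤ 4 / Real.pi * (2 / 2 ^ 2 * (2 * Real.sqrt D)) := by gcongr
      _ = M := by rw [hM]; ring
  calc (classNumber K : ℝ) ≤ ((∑ n ∈ Finset.Ioc 0 ⌊M⌋₊, n.divisors.card : ℕ) : ℝ) := by
        exact_mod_cast hle
    _ ≤ ⌊M⌋₊ * (harmonic ⌊M⌋₊ : ℝ) := sum_card_divisors_le _
    _ ≤ M * (1 + Real.log M) := by
        have h0 : 0 ≤ 1 + Real.log M := by linarith [Real.log_nonneg hM1]
        exact (mul_le_mul_of_nonneg_left (harmonic_floor_le_one_add_log M hM1)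
          (Nat.cast_nonneg _)).trans
          (mul_le_mul_of_nonneg_right (Nat.floor_le hM0.le) h0)
    _ < M * Real.log (2 * Real.exp 1 * Real.sqrt D) := by
        refine mul_lt_mul_of_pos_left ?_ hM0
        have : 2 * Real.exp 1 * Real.sqrt D = Real.exp 1 * (2 * Real.sqrt D) := by ring
        rw [this, Real.log_mul (Real.exp_ne_zero 1) (by positivity), Real.log_exp]
        linarith [Real.log_lt_log hM0 hMlt]
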